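/- Let f : ℝ² → ℝ be of class C² satisfying (i) D²f(p)(q,q) > 0 for all p, q ∈ ℝ² with q ≠ 0, and (ii) there is a constant λ > 0 with D²f(p)(q,q) ≤ λ · (ln(2+|p|)/(1+|p|)) · |q|² for all p, q ∈ ℝ². Let u ∈ C²(ℝ²) be an entire solution of the equation div[Df(∇u)] = 0 on ℝ². If there exist constants 0 ≤ m < 1 and K > 0 such that |∂₂u(x)| ≤ K(|∂₁u(x)|^m + 1) for all x ∈ ℝ², then u is an affine function, i.e. there exist a, b, c ∈ ℝ with u(x₁,x₂) = a x₁ + b x₂ + c. -/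

import Mathlib

open Real MeasureTheory Metric
open scoped ENNReal

noncomputable section

/-- `ℝ²` with its Euclidean structure. -/
abbrev E2 : Type := EuclideanSpace ℝ (Fin 2)

/-- The `i`-th standard basis vector of `ℝ²`. -/
def ee (i : Fin 2) : E2 := EuclideanSpace.single i 1

/-- The Hessian bilinear form `D²f(p)(q,q)`. -/
def Hess (f : E2 → ℝ) (p q : E2) : ℝ := iteratedFDeriv ℝ 2 f p ![q, q]

/-- The partial derivative `∂ᵢu(x)`. -/
def pd (u : E2 → ℝ) (i : Fin 2) (x : E2) : ℝ := fderiv ℝ u x (ee i)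

/-- The equation `div [Df(∇u)] = 0`, i.e. `∑ i, ∂ᵢ[(∂f/∂pᵢ)(∇u(x))] = 0` on `ℝ²`. -/
def solves (f u : E2 → ℝ) : Prop :=
  ∀ x : E2, ∑ i : Fin 2, fderiv ℝ (fun y => fderiv ℝ f (gradient u y) (ee i)) x (ee i) = 0

section Jacobian

variable {E : Type*} [NormedAddCommGroup E] [NormedSpace ℝ E]
  [MeasurableSpace E] [BorelSpace E] {μ : Measure E} [μ.IsAddHaarMeasure]

/-- Differentiation of a correlation integral in the translation parameter. -/
theorem hasDerivAt_integral_translate_mul {F G : E → ℝ} (hF : ContDiff ℝ 1 F) (hG : Continuous G)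
    (hc : HasCompactSupport F ∨ HasCompactSupport G) (v : E) :
    HasDerivAt (fun t : ℝ => ∫ x, F (x + t • v) * G x ∂μ) (∫ x, fderiv ℝ F x v * G x ∂μ) 0 := by
  have hF' : Continuous (fderiv ℝ F) := hF.continuous_fderiv one_ne_zero
  have hFc : Continuous F := hF.continuous
  have hK : ∃ K : Set E, IsCompact K ∧ ∀ t ∈ Set.Icc (-1 : ℝ) 1, ∀ x ∉ K,
      fderiv ℝ F (x + t • v) v * G x = 0 := by
    rcases hc with hc | hc
    · refine ⟨(fun z : ℝ × E => z.2 - z.1 • v) '' (Set.Icc (-1) 1 ×ˢ tsupport F),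
        (isCompact_Icc.prod hc).image (by fun_prop), fun t ht x hx => ?_⟩
      have : x + t • v ∉ tsupport F := fun h => hx ⟨(t, x + t • v), ⟨ht, h⟩, by simp⟩
      rw [image_eq_zero_of_notMem_tsupport (fun h => this (tsupport_fderiv_subset ℝ h))]
      simp
    · refine ⟨tsupport G, hc, fun t _ x hx => ?_⟩
      rw [image_eq_zero_of_notMem_tsupport hx, mul_zero]
  obtain ⟨K, hKc, hK0⟩ := hK
  obtain ⟨C, hC⟩ := (isCompact_Icc.prod hKc).exists_bound_of_continuousOn
    (f := fun z : ℝ × E => fderiv ℝ F (z.2 + z.1 • v) v * G z.2) (s := Set.Icc (-1) 1 ×ˢ K)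
    (by fun_prop)
  have hint : Integrable (fun x => F (x + (0 : ℝ) • v) * G x) μ := by
    simp only [zero_smul, add_zero]
    exact (hFc.mul hG).integrable_of_hasCompactSupport
      (hc.elim (fun h => h.mul_right) (fun h => h.mul_left))
  have key := hasDerivAt_integral_of_dominated_loc_of_deriv_le (μ := μ) (x₀ := (0 : ℝ))
    (F := fun t x => F (x + t • v) * G x) (F' := fun t x => fderiv ℝ F (x + t • v) v * G x)
    (s := Set.Icc (-1) 1) (bound := K.indicator fun _ => C)
    (Icc_mem_nhds (by norm_num) (by norm_num))
    (.of_forall fun t => Continuous.aestronglyMeasurable (by fun_prop)) hint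
    (Continuous.aestronglyMeasurable (by fun_prop))
    (.of_forall fun x t ht => ?_)
    ((integrable_indicator_iff hKc.measurableSet).2 (integrableOn_const hKc.measure_lt_top.ne))
    (.of_forall fun x t _ => ?_)
  · simpa using key.2
  · by_cases hx : x ∈ K
    · simpa [hx] using hC (t, x) ⟨ht, hx⟩
    · simp [hx, hK0 t ht x hx]
  · have h1 : HasDerivAt (fun t : ℝ => x + t • v) v t := by
      simpa using ((hasDerivAt_id t).smul_const v).const_add x
    exact (((hF.differentiable one_ne_zero _).hasFDerivAt).comp_hasDerivAt t h1).mul_const _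

/-- The Jacobian of two `C¹` functions, one of them compactly supported, has zero integral. -/
theorem integral_fderiv_mul_fderiv_comm [FiniteDimensional ℝ E] {a φ : E → ℝ}
    (ha : ContDiff ℝ 1 a) (hφ : ContDiff ℝ 1 φ) (hc : HasCompactSupport φ) (v w : E) :
    ∫ x, fderiv ℝ a x w * fderiv ℝ φ x v ∂μ = ∫ x, fderiv ℝ a x v * fderiv ℝ φ x w ∂μ := by
  have ha' : Continuous (fderiv ℝ a) := ha.continuous_fderiv one_ne_zero
  have hφ' : Continuous (fderiv ℝ φ) := hφ.continuous_fderiv one_ne_zero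
  have hac := ha.continuous
  have hφc := hφ.continuous
  have hcv : HasCompactSupport fun x => fderiv ℝ φ x v := hc.fderiv_apply ℝ v
  have h1 := hasDerivAt_integral_translate_mul (μ := μ) ha
    (G := fun x => fderiv ℝ φ x v) (by fun_prop) (.inr hcv) w
  have h2 := hasDerivAt_integral_translate_mul (μ := μ) hφ
    (G := fun x => fderiv ℝ a x v) (by fun_prop) (.inl hc) (-w)
  have heq : (fun t : ℝ => ∫ x, a (x + t • w) * fderiv ℝ φ x v ∂μ)
      = fun t : ℝ => - ∫ x, φ (x + t • -w) * fderiv ℝ a x v ∂μ := by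
    funext t
    have hfd : ∀ x, fderiv ℝ (fun x => a (x + t • w)) x v = fderiv ℝ a (x + t • w) v :=
      fun x => by rw [fderiv_comp_add_right]
    rw [integral_mul_fderiv_eq_neg_fderiv_mul_of_integrable
      (f := fun x => a (x + t • w)) (g := φ)]
    · rw [← integral_add_right_eq_self (fun x => φ (x + t • -w) * fderiv ℝ a x v) (t • w)]
      simp [hfd, mul_comm]
    · simp only [hfd]
      exact Continuous.integrable_of_hasCompactSupport (by fun_prop) hc.mul_left
    · exact Continuous.integrable_of_hasCompactSupport (by fun_prop) hcv.mul_left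
    · exact Continuous.integrable_of_hasCompactSupport (by fun_prop) hc.mul_left
    · exact fun x _ => ((ha.differentiable one_ne_zero).comp (by fun_prop)) x
    · exact fun x _ => hφ.differentiable one_ne_zero x
  rw [heq] at h1
  rw [h1.unique h2.neg]
  simp [integral_neg, mul_comm]

end Jacobian

/-- Rescaled bump functions with gradient of order `1 / R`, supported in an annulus. -/
theorem exists_cutoff (E : Type*) [NormedAddCommGroup E] [InnerProductSpace ℝ E]
    [FiniteDimensional ℝ E] :
    ∃ M : ℝ, ∀ R : ℝ, 0 < R → ∃ η : E → ℝ, ContDiff ℝ 1 η ∧ HasCompactSupport η ∧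
      (∀ x, 0 ≤ η x) ∧ (∀ x, η x ≤ 1) ∧ (∀ x ∈ ball (0 : E) R, η x = 1) ∧
      (∀ x, ‖fderiv ℝ η x‖ ≤ M / R) ∧
      ∀ x ∉ ball (0 : E) (3 * R) \ ball 0 R, fderiv ℝ η x = 0 := by
  let χ : ContDiffBump (0 : E) := ⟨1, 2, one_pos, one_lt_two⟩
  have hχ : ContDiff ℝ 1 χ := χ.contDiff
  obtain ⟨M, hM⟩ := (hχ.continuous_fderiv one_ne_zero).bounded_above_of_compact_support
    (χ.hasCompactSupport.fderiv ℝ)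
  refine ⟨M, fun R hR => ⟨fun x => χ (R⁻¹ • x), hχ.comp (contDiff_const_smul _),
    χ.hasCompactSupport.comp_smul (inv_ne_zero hR.ne'), fun x => χ.nonneg, fun x => χ.le_one,
    fun x hx => χ.one_of_mem_closedBall ?_, fun x => ?_, fun x hx => ?_⟩⟩
  · rw [mem_ball_zero_iff] at hx
    rw [mem_closedBall_zero_iff, norm_smul, norm_inv, Real.norm_of_nonneg hR.le]
    exact (inv_mul_lt_iff₀ hR).2 (by simpa [χ] using hx) |>.le
  · rw [fderiv_comp_smul, norm_smul, norm_inv, Real.norm_of_nonneg hR.le, div_eq_inv_mul]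
    gcongr
    exact hM _
  · rw [fderiv_comp_smul]
    suffices h : fderiv ℝ χ (R⁻¹ • x) = 0 by rw [h, smul_zero]
    have hn : ‖R⁻¹ • x‖ = R⁻¹ * ‖x‖ := by
      rw [norm_smul, norm_inv, Real.norm_of_nonneg hR.le]
    by_cases h1 : ‖x‖ < R
    · have hb : R⁻¹ • x ∈ ball (0 : E) χ.rIn := by
        rw [mem_ball_zero_iff, hn]
        exact (inv_mul_lt_iff₀ hR).2 (by simpa [χ] using h1)
      rw [(χ.eventuallyEq_one_of_mem_ball hb).fderiv_eq]
      simp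
    · have h3 : 3 * R ≤ ‖x‖ := by
        by_contra! h
        exact hx ⟨mem_ball_zero_iff.2 h, fun h' => h1 (mem_ball_zero_iff.1 h')⟩
      refine image_eq_zero_of_notMem_tsupport fun h => ?_
      have h' := tsupport_fderiv_subset ℝ h
      rw [χ.tsupport_eq, mem_closedBall_zero_iff, hn, inv_mul_le_iff₀ hR] at h'
      change ‖x‖ ≤ R * 2 at h'
      linarith

/-- A strictly increasing function of growth order `s` at infinity. -/
theorem exists_increasing_of_growth {s : ℝ} (hs : 0 < s) :
    ∃ g : ℝ → ℝ, ContDiff ℝ 1 g ∧ (∀ t, 0 < deriv g t) ∧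
      ∀ t, g t ^ 2 ≤ s⁻¹ * (1 + |t|) ^ (1 + s) * deriv g t := by
  have hA : ∀ t : ℝ, 0 < 1 + t ^ 2 := fun t => by positivity
  have hd : ∀ t : ℝ, deriv (fun t : ℝ => t * (1 + t ^ 2) ^ ((s - 1) / 2)) t =
      (1 + t ^ 2) ^ ((s - 3) / 2) * (1 + s * t ^ 2) := by
    intro t
    have h1 : HasDerivAt (fun t : ℝ => 1 + t ^ 2) (2 * t) t := by
      simpa using (hasDerivAt_pow 2 t).const_add 1
    have h2 := (hasDerivAt_id t).mul (h1.rpow_const (p := (s - 1) / 2) (.inl (hA t).ne'))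
    refine (h2.deriv).trans ?_
    have e1 : (1 + t ^ 2) ^ ((s - 1) / 2) = (1 + t ^ 2) ^ ((s - 3) / 2) * (1 + t ^ 2) := by
      rw [← Real.rpow_add_one (hA t).ne']
      ring_nf
    have e2 : (s - 1) / 2 - 1 = (s - 3) / 2 := by ring
    simp only [id, e1, e2]
    ring
  refine ⟨fun t => t * (1 + t ^ 2) ^ ((s - 1) / 2), ?_, fun t => ?_, fun t => ?_⟩
  · exact contDiff_id.mul (ContDiff.rpow_const_of_ne (by fun_prop) fun t => (hA t).ne')
  · rw [hd]
    have := hA t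
    positivity
  · rw [hd]
    set P := (1 + t ^ 2) ^ ((s - 3) / 2) with hP
    have hP0 : 0 < P := Real.rpow_pos_of_pos (hA t) _
    have e1 : (1 + t ^ 2) ^ ((s - 1) / 2) = P * (1 + t ^ 2) := by
      rw [hP, ← Real.rpow_add_one (hA t).ne']
      ring_nf
    have e2 : P * (1 + t ^ 2) ^ 2 ≤ (1 + |t|) ^ (1 + s) := by
      rw [hP, ← Real.rpow_natCast (1 + t ^ 2) 2, ← Real.rpow_add (hA t)]
      have h3 : (1 + |t|) ^ (1 + s) = ((1 + |t|) ^ 2) ^ ((1 + s) / 2) := by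
        rw [← Real.rpow_natCast, ← Real.rpow_mul (by positivity)]
        push_cast
        ring_nf
      rw [h3]
      have h4 : (s - 3) / 2 + ((2 : ℕ) : ℝ) = (1 + s) / 2 := by push_cast; ring
      rw [h4]
      refine Real.rpow_le_rpow (hA t).le ?_ (by positivity)
      nlinarith [abs_nonneg t, sq_abs t]
    simp only [e1]
    calc (t * (P * (1 + t ^ 2))) ^ 2 = s⁻¹ * (P * (1 + t ^ 2) ^ 2) * (P * (s * t ^ 2)) := by
          field_simp
      _ ≤ s⁻¹ * (1 + |t|) ^ (1 + s) * (P * (1 + s * t ^ 2)) := by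
          gcongr
          linarith

theorem exists_growth_bound {m K : ℝ} (hm0 : 0 ≤ m) (hm1 : m < 1) (hK : 0 < K) :
    ∃ C : ℝ, 0 ≤ C ∧ ∀ r w : ℝ, 0 ≤ r → |w| ≤ K * (r ^ m + 1) →
      (1 + |w|) ^ (1 + (1 - m) / 2) * (log (2 + r) / (1 + r)) ≤ C := by
  set s := (1 - m) / 2 with hs
  have hs0 : 0 < s := by rw [hs]; linarith
  refine ⟨(1 + 2 * K) ^ (1 + s) * (2 ^ s / s), by positivity, fun r w hr hw => ?_⟩
  have h1r : 1 ≤ 1 + r := by linarith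
  have hrm : r ^ m ≤ (1 + r) ^ m := Real.rpow_le_rpow hr (by linarith) hm0
  have hone : 1 ≤ (1 + r) ^ m := Real.one_le_rpow h1r hm0
  have h1 : 1 + |w| ≤ (1 + 2 * K) * (1 + r) ^ m := by nlinarith
  have h2 : (1 + |w|) ^ (1 + s) ≤ (1 + 2 * K) ^ (1 + s) * (1 + r) ^ (m * (1 + s)) := by
    rw [Real.rpow_mul (by positivity), ← Real.mul_rpow (by positivity) (by positivity)]
    exact Real.rpow_le_rpow (by positivity) h1 (by positivity)
  have h3 : log (2 + r) ≤ 2 ^ s / s * (1 + r) ^ s := by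
    refine (Real.log_le_rpow_div (by positivity) hs0).trans ?_
    rw [div_mul_eq_mul_div, ← Real.mul_rpow (by positivity) (by positivity)]
    gcongr
    linarith
  have h4 : (1 + r) ^ (m * (1 + s)) * (1 + r) ^ s ≤ 1 + r := by
    rw [← Real.rpow_add (by positivity)]
    refine (Real.rpow_le_rpow_of_exponent_le h1r (y := m * (1 + s) + s) (z := 1) ?_).trans
      (Real.rpow_one _).le
    nlinarith
  have h5 : 0 ≤ log (2 + r) := Real.log_nonneg (by linarith)
  rw [mul_div_assoc', div_le_iff₀ (by positivity)]
  calc (1 + |w|) ^ (1 + s) * log (2 + r)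
      ≤ ((1 + 2 * K) ^ (1 + s) * (1 + r) ^ (m * (1 + s))) * (2 ^ s / s * (1 + r) ^ s) := by
        gcongr
    _ = (1 + 2 * K) ^ (1 + s) * (2 ^ s / s) * ((1 + r) ^ (m * (1 + s)) * (1 + r) ^ s) := by ring
    _ ≤ (1 + 2 * K) ^ (1 + s) * (2 ^ s / s) * (1 + r) := by gcongr

/-- In dimension two, an energy density satisfying a Caccioppoli inequality vanishes. -/
theorem eq_zero_of_caccioppoli {E : Type*} [NormedAddCommGroup E] [InnerProductSpace ℝ E]
    [FiniteDimensional ℝ E] [MeasurableSpace E] [BorelSpace E] (hdim : Module.finrank ℝ E = 2)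
    {e : E → ℝ} (he : Continuous e) (he0 : ∀ x, 0 ≤ e x) {C : ℝ} (hC : 0 ≤ C)
    (H : ∀ η : E → ℝ, ContDiff ℝ 1 η → HasCompactSupport η →
      ∃ J : E → ℝ, Integrable J ∧ ∫ x, J x = 0 ∧
        (∀ x, fderiv ℝ η x = 0 → η x ^ 2 * e x = J x) ∧
        ∀ t : ℝ, 0 < t → ∀ x,
          η x ^ 2 * e x ≤ J x + t * (η x ^ 2 * e x) + C / t * ‖fderiv ℝ η x‖ ^ 2) :
    ∀ x, e x = 0 := by
  obtain ⟨M, hM⟩ := exists_cutoff E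
  set B : ℝ := C * M ^ 2 * 9 * volume.real (ball (0 : E) 1) with hB
  have hB0 : 0 ≤ B := by positivity
  have hball : ∀ R : ℝ, IntegrableOn e (ball 0 R) := fun R =>
    (he.continuousOn.integrableOn_compact (isCompact_closedBall 0 R)).mono_set ball_subset_closedBall
  set a : ℝ → ℝ := fun R => ∫ x in ball 0 R, e x with ha
  have key : ∀ R : ℝ, 0 < R → ∃ I I' : ℝ, a R ≤ I ∧ I' ≤ I ∧ I' ≤ a (3 * R) - a R ∧
      ∀ t : ℝ, 0 < t → I ≤ t * I' + B / t := by
    intro R hR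
    obtain ⟨η, hη, hηc, hη0, hη1, hηR, hηM, hηS⟩ := hM R hR
    obtain ⟨J, hJ, hJ0, hJeq, hJle⟩ := H η hη hηc
    set S := ball (0 : E) (3 * R) \ ball 0 R with hS
    have hSm : MeasurableSet S := measurableSet_ball.diff measurableSet_ball
    have hsub : ball (0 : E) R ⊆ ball 0 (3 * R) := ball_subset_ball (by linarith)
    have hSfin : volume S ≠ ⊤ :=
      ((measure_mono Set.sdiff_subset).trans_lt measure_ball_lt_top).ne
    have hηcont := hη.continuous
    have hint : Integrable fun x => η x ^ 2 * e x :=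
      Continuous.integrable_of_hasCompactSupport (by fun_prop)
        (HasCompactSupport.mul_right (f := fun x => η x ^ 2)
          (hηc.comp_left (g := fun y => y ^ 2) (by norm_num)))
    have hnn : ∀ x, 0 ≤ η x ^ 2 * e x := fun x => mul_nonneg (sq_nonneg _) (he0 x)
    refine ⟨∫ x, η x ^ 2 * e x, ∫ x in S, η x ^ 2 * e x, ?_, ?_, ?_, fun t ht => ?_⟩
    · calc a R = ∫ x in ball 0 R, η x ^ 2 * e x :=
            setIntegral_congr_fun measurableSet_ball fun x hx => by simp [hηR x hx]
        _ ≤ _ := setIntegral_le_integral hint (.of_forall hnn)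
    · exact setIntegral_le_integral hint (.of_forall hnn)
    · rw [ha, ← setIntegral_sdiff measurableSet_ball (hball _) hsub]
      refine setIntegral_mono hint.integrableOn ((hball _).mono_set Set.sdiff_subset) fun x => ?_
      exact mul_le_of_le_one_left (he0 x) (pow_le_one₀ (hη0 x) (hη1 x))
    · have hpt : ∀ x, η x ^ 2 * e x ≤ J x + t * S.indicator (fun x => η x ^ 2 * e x) x +
          S.indicator (fun _ => C / t * (M / R) ^ 2) x := by
        intro x
        by_cases hx : x ∈ S
        · simp only [Set.indicator_of_mem hx]
          refine (hJle t ht x).trans ?_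
          gcongr
          exact hηM x
        · simp [hx, hJeq x (hηS x hx)]
      have hi1 : Integrable (S.indicator fun x => η x ^ 2 * e x) := hint.indicator hSm
      have hi2 : Integrable (S.indicator fun _ => C / t * (M / R) ^ 2) :=
        (integrable_indicator_iff hSm).2 (integrableOn_const hSfin)
      have hSvol : volume.real S ≤ 9 * R ^ 2 * volume.real (ball (0 : E) 1) := by
        refine (measureReal_mono Set.sdiff_subset measure_ball_lt_top.ne).trans (le_of_eq ?_)
        rw [Measure.real, Measure.addHaar_ball_of_pos _ _ (by positivity), hdim, ENNReal.toReal_mul,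
          ENNReal.toReal_ofReal (by positivity), Measure.real]
        ring
      calc ∫ x, η x ^ 2 * e x
          ≤ ∫ x, (J x + t * S.indicator (fun x => η x ^ 2 * e x) x +
            S.indicator (fun _ => C / t * (M / R) ^ 2) x) :=
            integral_mono hint ((hJ.add (hi1.const_mul t)).add hi2) hpt
        _ = t * (∫ x in S, η x ^ 2 * e x) + volume.real S * (C / t * (M / R) ^ 2) := by
            have hi3 : Integrable fun x => J x + t * S.indicator (fun x => η x ^ 2 * e x) x :=
              hJ.add (hi1.const_mul t)
            rw [integral_add hi3 hi2, integral_add hJ (hi1.const_mul t),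
              integral_const_mul, integral_indicator hSm, integral_indicator hSm, hJ0,
              setIntegral_const, zero_add, smul_eq_mul]
        _ ≤ t * (∫ x in S, η x ^ 2 * e x) +
            9 * R ^ 2 * volume.real (ball (0 : E) 1) * (C / t * (M / R) ^ 2) := by
            gcongr
        _ = _ := by
            rw [hB]
            field_simp
  have hmono : Monotone fun k : ℕ => a (3 ^ k) := fun i j hij =>
    setIntegral_mono_set (hball _) (.of_forall he0)
      (ball_subset_ball (pow_le_pow_right₀ (by norm_num) hij)).eventuallyLE
  have hbdd : BddAbove (Set.range fun k : ℕ => a (3 ^ k)) := by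
    refine ⟨4 * B, ?_⟩
    rintro _ ⟨k, rfl⟩
    obtain ⟨I, I', h1, h2, -, h4⟩ := key (3 ^ k) (by positivity)
    have := h4 (1 / 2) (by norm_num)
    have e1 : B / (1 / 2) = 2 * B := by ring
    simp only
    linarith
  have hlim := tendsto_atTop_ciSup hmono hbdd
  set L := ⨆ k : ℕ, a (3 ^ k) with hL
  have hLt : ∀ t : ℝ, 0 < t → L ≤ B / t := by
    intro t ht
    have hlim' := (hlim.comp (Filter.tendsto_add_atTop_nat 1)).sub hlim
    have h := (hlim'.const_mul t).add_const (B / t)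
    rw [sub_self, mul_zero, zero_add] at h
    refine le_of_tendsto_of_tendsto' hlim h fun k => ?_
    obtain ⟨I, I', h1, -, h3, h4⟩ := key (3 ^ k) (by positivity)
    have h5 := mul_le_mul_of_nonneg_left h3 ht.le
    have h6 : (3 : ℝ) ^ (k + 1) = 3 * 3 ^ k := pow_succ' _ _
    simp only [Function.comp, h6]
    linarith [h4 t ht]
  have hL0 : L ≤ 0 := by
    refine le_of_forall_pos_le_add fun ε hε => ?_
    refine (hLt ((B + 1) / ε) (by positivity)).trans ?_
    rw [zero_add, div_div_eq_mul_div, div_le_iff₀ (by positivity)]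
    nlinarith
  intro x
  obtain ⟨k, hk⟩ := pow_unbounded_of_one_lt ‖x‖ (by norm_num : (1 : ℝ) < 3)
  have h0 : ∫ y in ball (0 : E) (3 ^ k), e y = 0 :=
    le_antisymm ((le_ciSup hbdd k).trans hL0) (integral_nonneg he0)
  have hae := (integral_eq_zero_iff_of_nonneg he0 (hball _)).1 h0
  exact Measure.eqOn_open_of_ae_eq hae isOpen_ball he.continuousOn continuousOn_const
    (mem_ball_zero_iff.2 hk)

section Plane

open InnerProductSpace

theorem gradient_coord (u : E2 → ℝ) (x : E2) (i : Fin 2) : gradient u x i = pd u i x := by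
  rw [pd, ← toDual_gradient, toDual_apply_apply, ee, EuclideanSpace.inner_single_right]
  simp

theorem eq_sum_ee (q : E2) : q = q 0 • ee 0 + q 1 • ee 1 := by
  ext i
  fin_cases i <;> simp [ee]

theorem contDiff_gradient {u : E2 → ℝ} (hu : ContDiff ℝ 2 u) : ContDiff ℝ 1 (gradient u) :=
  (toDual ℝ E2).symm.contDiff.comp (hu.fderiv_right (m := 1) (by norm_num))

theorem contDiff_pd {u : E2 → ℝ} (hu : ContDiff ℝ 2 u) (i : Fin 2) : ContDiff ℝ 1 (pd u i) :=
  (hu.fderiv_right (m := 1) (by norm_num)).clm_apply contDiff_const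

theorem Hess_eq (f : E2 → ℝ) (p q : E2) : Hess f p q = fderiv ℝ (fderiv ℝ f) p q q := by
  simp [Hess, iteratedFDeriv_two_apply]

theorem fderiv_fderiv_symm {u : E2 → ℝ} (hu : ContDiff ℝ 2 u) (x v w : E2) :
    fderiv ℝ (fderiv ℝ u) x v w = fderiv ℝ (fderiv ℝ u) x w v :=
  hu.contDiffAt.isSymmSndFDerivAt (by simp) v w

theorem fderiv_pd {u : E2 → ℝ} (hu : ContDiff ℝ 2 u) (i : Fin 2) (x v : E2) :
    fderiv ℝ (pd u i) x v = fderiv ℝ (fderiv ℝ u) x v (ee i) := by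
  have h : DifferentiableAt ℝ (fderiv ℝ u) x :=
    (hu.fderiv_right (m := 1) (by norm_num)).differentiable one_ne_zero x
  have h' := h.hasFDerivAt.clm_apply (hasFDerivAt_const (ee i) x)
  rw [show pd u i = fun y => fderiv ℝ u y (ee i) from rfl, h'.fderiv]
  simp

theorem fderiv_gradient_coord {u : E2 → ℝ} (hu : ContDiff ℝ 2 u) (x v : E2) (i : Fin 2) :
    fderiv ℝ (gradient u) x v i = fderiv ℝ (pd u i) x v := by
  have h : HasFDerivAt (gradient u) (fderiv ℝ (gradient u) x) x :=
    ((contDiff_gradient hu).differentiable one_ne_zero x).hasFDerivAt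
  have h' := (EuclideanSpace.proj (𝕜 := ℝ) i).hasFDerivAt.comp x h
  rw [show pd u i = fun y => gradient u y i from funext fun y => (gradient_coord u y i).symm]
  exact (congrArg (fun L => L v) h'.fderiv).symm

/-- Differentiating `∇u` in direction `i` gives the gradient of `∂ᵢu`. -/
theorem fderiv_gradient_ee {u : E2 → ℝ} (hu : ContDiff ℝ 2 u) (x : E2) (i : Fin 2) :
    fderiv ℝ (gradient u) x (ee i) = gradient (pd u i) x := by
  ext j
  rw [fderiv_gradient_coord hu, gradient_coord, fderiv_pd hu, fderiv_fderiv_symm hu,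
    ← fderiv_pd hu]
  rfl

theorem fderiv_flux {f u : E2 → ℝ} (hf : ContDiff ℝ 2 f) (hu : ContDiff ℝ 2 u) (i j : Fin 2)
    (x : E2) :
    fderiv ℝ (fun y => fderiv ℝ f (gradient u y) (ee i)) x (ee j) =
      fderiv ℝ (fderiv ℝ f) (gradient u x) (gradient (pd u j) x) (ee i) := by
  have h1 : HasFDerivAt (gradient u) (fderiv ℝ (gradient u) x) x :=
    ((contDiff_gradient hu).differentiable one_ne_zero x).hasFDerivAt
  have h2 : HasFDerivAt (pd f i) (fderiv ℝ (pd f i) (gradient u x)) (gradient u x) :=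
    ((contDiff_pd hf i).differentiable one_ne_zero _).hasFDerivAt
  have h3 := (h2.comp x h1).fderiv
  change fderiv ℝ (pd f i ∘ gradient u) x (ee j) = _
  rw [h3, ContinuousLinearMap.comp_apply, fderiv_gradient_ee hu, fderiv_pd hf]

/-- The weak form of the equation differentiated in the second variable. -/
theorem integral_linearized_eq_zero {f u φ : E2 → ℝ} (hf : ContDiff ℝ 2 f) (hu : ContDiff ℝ 2 u)
    (heq : solves f u) (hφ : ContDiff ℝ 1 φ) (hc : HasCompactSupport φ) :
    Integrable (fun x => fderiv ℝ (fderiv ℝ f) (gradient u x) (gradient (pd u 1) x)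
      (gradient φ x)) ∧
    ∫ x, fderiv ℝ (fderiv ℝ f) (gradient u x) (gradient (pd u 1) x) (gradient φ x) = 0 := by
  set V : E2 → ℝ := fun y => fderiv ℝ f (gradient u y) (ee 0) with hV
  have hVc : ContDiff ℝ 1 V := (contDiff_pd hf 0).comp (contDiff_gradient hu)
  have hV' : Continuous (fderiv ℝ V) := hVc.continuous_fderiv one_ne_zero
  have hφ' : Continuous (fderiv ℝ φ) := hφ.continuous_fderiv one_ne_zero
  have hpt : ∀ x, fderiv ℝ (fderiv ℝ f) (gradient u x) (gradient (pd u 1) x) (gradient φ x) =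
      fderiv ℝ V x (ee 1) * fderiv ℝ φ x (ee 0) - fderiv ℝ V x (ee 0) * fderiv ℝ φ x (ee 1) := by
    intro x
    have h := heq x
    rw [Fin.sum_univ_two, fderiv_flux hf hu 1 1] at h
    rw [eq_sum_ee (gradient φ x), map_add, map_smul, map_smul, hV, fderiv_flux hf hu 0 1,
      gradient_coord, gradient_coord, pd, pd, smul_eq_mul, smul_eq_mul]
    linear_combination fderiv ℝ φ x (ee 1) * h
  have hi : ∀ v w, Integrable fun x => fderiv ℝ V x v * fderiv ℝ φ x w := fun v w =>
    Continuous.integrable_of_hasCompactSupport (by fun_prop) (hc.fderiv_apply ℝ w).mul_left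
  simp only [hpt]
  refine ⟨(hi _ _).sub (hi _ _), ?_⟩
  rw [integral_sub (hi _ _) (hi _ _), integral_fderiv_mul_fderiv_comm hVc hφ hc, sub_self]

theorem gradient_sq_mul_comp {η w : E2 → ℝ} {g : ℝ → ℝ} {x : E2} (hη : DifferentiableAt ℝ η x)
    (hw : DifferentiableAt ℝ w x) (hg : DifferentiableAt ℝ g (w x)) :
    gradient (fun y => η y ^ 2 * g (w y)) x =
      (η x ^ 2 * deriv g (w x)) • gradient w x + (2 * η x * g (w x)) • gradient η x := by
  have h := (hη.hasFDerivAt.pow 2).mul (hg.hasDerivAt.comp_hasFDerivAt x hw.hasFDerivAt)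
  apply (toDual ℝ E2).injective
  rw [toDual_gradient, map_add, map_smul, map_smul, toDual_gradient, toDual_gradient]
  refine h.fderiv.trans ?_
  ext v
  simp
  ring

/-- A weighted Cauchy–Schwarz inequality for a symmetric nonnegative bilinear form. -/
theorem weighted_cauchy_schwarz {D : E2 →L[ℝ] E2 →L[ℝ] ℝ} (hsymm : ∀ v w, D v w = D w v)
    (hnn : ∀ v, 0 ≤ D v v) (q z : E2) (η γ : ℝ) {γ' t : ℝ} (hγ' : 0 < γ') (ht : 0 < t) :
    0 ≤ 2 * η * γ * D q z + t * (η ^ 2 * (γ' * D q q)) + γ ^ 2 / γ' * D z z / t := by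
  have h := hnn ((t * η * γ') • q + γ • z)
  simp only [map_add, map_smul, add_apply, smul_apply,
    smul_eq_mul, hsymm z q] at h
  have e : 2 * η * γ * D q z + t * (η ^ 2 * (γ' * D q q)) + γ ^ 2 / γ' * D z z / t =
      (t * η * γ' * (t * η * γ' * D q q + γ * D q z) +
        γ * (t * η * γ' * D q z + γ * D z z)) / (t * γ') := by
    field_simp
    ring
  rw [e]
  refine div_nonneg ?_ (by positivity)
  linarith

/-- Under the growth condition the second partial derivative has vanishing gradient. -/
theorem gradient_pd_one_eq_zero {f u : E2 → ℝ} (hf : ContDiff ℝ 2 f)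
    (hpos : ∀ p q : E2, q ≠ 0 → 0 < Hess f p q) {lam : ℝ} (hlam : 0 < lam)
    (hgrow : ∀ p q : E2, Hess f p q ≤ lam * (Real.log (2 + ‖p‖) / (1 + ‖p‖)) * ‖q‖ ^ 2)
    (hu : ContDiff ℝ 2 u) (heq : solves f u) {m K : ℝ} (hm0 : 0 ≤ m) (hm1 : m < 1) (hK : 0 < K)
    (hbd : ∀ x : E2, |pd u 1 x| ≤ K * (|pd u 0 x| ^ m + 1)) (x : E2) :
    gradient (pd u 1) x = 0 := by
  have hs : 0 < (1 - m) / 2 := by linarith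
  obtain ⟨g, hg, hg', hgs⟩ := exists_increasing_of_growth hs
  obtain ⟨C, hC, hCle⟩ := exists_growth_bound hm0 hm1 hK
  set s := (1 - m) / 2
  set D : E2 → E2 →L[ℝ] E2 →L[ℝ] ℝ := fun x => fderiv ℝ (fderiv ℝ f) (gradient u x) with hD
  have hw : ContDiff ℝ 1 (pd u 1) := contDiff_pd hu 1
  have hDq : ∀ x q, D x q q = Hess f (gradient u x) q := fun x q => (Hess_eq _ _ _).symm
  have hnn : ∀ x q, 0 ≤ D x q q := by
    intro x q
    rcases eq_or_ne q 0 with rfl | hq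
    · simp
    · rw [hDq]
      exact (hpos _ q hq).le
  have hDc : Continuous D :=
    ((hf.fderiv_right (m := 1) (by norm_num)).continuous_fderiv one_ne_zero).comp
      (contDiff_gradient hu).continuous
  have hqc : Continuous (gradient (pd u 1)) :=
    (toDual ℝ E2).symm.continuous.comp (hw.continuous_fderiv one_ne_zero)
  have hg'c : Continuous (deriv g) := hg.continuous_deriv le_rfl
  have hwc := hw.continuous
  have hweight : ∀ x z, g (pd u 1 x) ^ 2 / deriv g (pd u 1 x) * D x z z ≤
      lam * (s⁻¹ * C) * ‖z‖ ^ 2 := by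
    intro x z
    have hbd' : |pd u 1 x| ≤ K * (‖gradient u x‖ ^ m + 1) := by
      refine (hbd x).trans ?_
      gcongr
      rw [← gradient_coord, ← Real.norm_eq_abs]
      exact PiLp.norm_apply_le _ _
    have h1 : g (pd u 1 x) ^ 2 / deriv g (pd u 1 x) ≤ s⁻¹ * (1 + |pd u 1 x|) ^ (1 + s) :=
      (div_le_iff₀ (hg' _)).2 (hgs _)
    have h2 := hCle _ _ (norm_nonneg _) hbd'
    have h3 := hgrow (gradient u x) z
    rw [← hDq] at h3
    calc _ ≤ s⁻¹ * (1 + |pd u 1 x|) ^ (1 + s) *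
          (lam * (Real.log (2 + ‖gradient u x‖) / (1 + ‖gradient u x‖)) * ‖z‖ ^ 2) :=
          mul_le_mul h1 h3 (hnn x z) (by positivity)
      _ = lam * (s⁻¹ * ((1 + |pd u 1 x|) ^ (1 + s) *
          (Real.log (2 + ‖gradient u x‖) / (1 + ‖gradient u x‖)))) * ‖z‖ ^ 2 := by ring
      _ ≤ _ := by gcongr
  have henergy := eq_zero_of_caccioppoli (E := E2) (by simp)
    (e := fun x => deriv g (pd u 1 x) * D x (gradient (pd u 1) x) (gradient (pd u 1) x))
    (by fun_prop) (fun x => mul_nonneg (hg' _).le (hnn _ _)) (C := lam * (s⁻¹ * C))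
    (by positivity) ?_ x
  · by_contra hne
    have h1 := hpos (gradient u x) _ hne
    rw [← hDq] at h1
    exact (mul_pos (hg' _) h1).ne' henergy
  · intro η hη hηc
    have hφ : ContDiff ℝ 1 fun y => η y ^ 2 * g (pd u 1 y) := (hη.pow 2).mul (hg.comp hw)
    have hφc : HasCompactSupport fun y => η y ^ 2 * g (pd u 1 y) :=
      HasCompactSupport.mul_right (f := fun y => η y ^ 2)
        (hηc.comp_left (g := fun y => y ^ 2) (by norm_num))
    obtain ⟨hi, h0⟩ := integral_linearized_eq_zero hf hu heq hφ hφc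
    have hJ : ∀ y, D y (gradient (pd u 1) y) (gradient (fun y => η y ^ 2 * g (pd u 1 y)) y) =
        η y ^ 2 * (deriv g (pd u 1 y) * D y (gradient (pd u 1) y) (gradient (pd u 1) y)) +
        2 * η y * g (pd u 1 y) * D y (gradient (pd u 1) y) (gradient η y) := by
      intro y
      rw [gradient_sq_mul_comp (hη.differentiable one_ne_zero y) (hw.differentiable one_ne_zero y)
        (hg.differentiable one_ne_zero _), map_add, map_smul, map_smul, smul_eq_mul, smul_eq_mul,
        mul_assoc]
    refine ⟨_, hi, h0, fun y hy => ?_, fun t ht y => ?_⟩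
    · refine Eq.symm ((hJ y).trans ?_)
      simp [gradient, hy]
    · have h1 := weighted_cauchy_schwarz (D := D y) (fun v w => fderiv_fderiv_symm hf _ v w) (hnn y)
        (gradient (pd u 1) y) (gradient η y) (η y) (g (pd u 1 y)) (hg' (pd u 1 y)) ht
      have h2 := div_le_div_of_nonneg_right (hweight y (gradient η y)) ht.le
      have h3 : ‖gradient η y‖ = ‖fderiv ℝ η y‖ := (toDual ℝ E2).symm.norm_map _
      rw [h3, mul_div_right_comm (lam * (s⁻¹ * C))] at h2
      have h4 := hJ y
      simp only [hD] at h1 h2 h4 ⊢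
      linarith

theorem affine_of_gradient_const {u : E2 → ℝ} (hu : Differentiable ℝ u) {p : E2}
    (hp : ∀ x, gradient u x = p) : ∃ a b c : ℝ, ∀ x : E2, u x = a * x 0 + b * x 1 + c := by
  have hd : ∀ x, fderiv ℝ (fun y => u y - toDual ℝ E2 p y) x = 0 := by
    intro x
    rw [fderiv_fun_sub (hu x) (toDual ℝ E2 p).differentiableAt, ContinuousLinearMap.fderiv,
      ← toDual_gradient, hp, sub_self]
  have hc := is_const_of_fderiv_eq_zero (hu.sub (toDual ℝ E2 p).differentiable) hd
  refine ⟨p 0, p 1, u 0, fun x => ?_⟩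
  have h := hc x 0
  simp only [Pi.sub_apply, map_zero, sub_zero, toDual_apply_apply, PiLp.inner_apply,
    Fin.sum_univ_two, RCLike.inner_apply, conj_trivial] at h
  linarith

end Plane

theorem statement1 (f u : E2 → ℝ)
    (hf : ContDiff ℝ 2 f)
    (hpos : ∀ p q : E2, q ≠ 0 → 0 < Hess f p q)
    (lam : ℝ) (hlam : 0 < lam)
    (hgrow : ∀ p q : E2, Hess f p q ≤ lam * (Real.log (2 + ‖p‖) / (1 + ‖p‖)) * ‖q‖ ^ 2)
    (hu : ContDiff ℝ 2 u) (heq : solves f u)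
    (m K : ℝ) (hm0 : 0 ≤ m) (hm1 : m < 1) (hK : 0 < K)
    (hbd : ∀ x : E2, |pd u 1 x| ≤ K * (|pd u 0 x| ^ m + 1)) :
    ∃ a b c : ℝ, ∀ x : E2, u x = a * x 0 + b * x 1 + c := by
  have h1 := gradient_pd_one_eq_zero hf hpos hlam hgrow hu heq hm0 hm1 hK hbd
  have h0 : ∀ x, gradient (pd u 0) x = 0 := by
    intro x
    have h01 : gradient (pd u 0) x 1 = 0 := by
      rw [gradient_coord, pd, fderiv_pd hu, fderiv_fderiv_symm hu, ← fderiv_pd hu]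
      change pd (pd u 1) 0 x = 0
      rw [← gradient_coord, h1]
      rfl
    have hq := eq_sum_ee (gradient (pd u 0) x)
    rw [h01, zero_smul, add_zero] at hq
    have he := heq x
    rw [Fin.sum_univ_two, fderiv_flux hf hu, fderiv_flux hf hu, h1 x, map_zero,
      zero_apply, add_zero] at he
    by_contra hne
    have hp := hpos (gradient u x) _ hne
    rw [Hess_eq] at hp
    nth_rewrite 2 [hq] at hp
    rw [map_smul, he, smul_zero] at hp
    exact hp.false
  have hfd : ∀ x, fderiv ℝ (gradient u) x = 0 := by
    intro x
    ext1 v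
    rw [eq_sum_ee v, map_add, map_smul, map_smul, fderiv_gradient_ee hu, fderiv_gradient_ee hu,
      h0, h1]
    simp
  exact affine_of_gradient_const (hu.differentiable two_ne_zero)
    fun x => is_const_of_fderiv_eq_zero ((contDiff_gradient hu).differentiable one_ne_zero) hfd x 0
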